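/- Suppose the β_n, α_n satisfy, for all n ≥ 1 and all t, the extended relativistic Toda lattice equation β_n'(t) = conj(q)·β_n(t)·(α_n(t) − α_{n+1}(t)) + q·β_n(t)·( α_{n+1}(t)/(β_{n+1}(t)·β_n(t)) − α_n(t)/(β_n(t)·β_{n−1}(t)) ). Then for every n ≥ 1 and every t, c_n'(t) = 4·Re(q)·[ d_n(t)·(c_n(t)+c_{n−1}(t))/(1+c_{n−1}(t)²) − d_{n+1}(t)·(c_n(t)+c_{n+1}(t))/(1+c_{n+1}(t)²) ] + 4·Im(q)·[ d_n(t)·(1−c_n(t)c_{n−1}(t))/(1+c_{n−1}(t)²) − d_{n+1}(t)·(1−c_n(t)c_{n+1}(t))/(1+c_{n+1}(t)²) ]; in particular, since d_1 = 0, for n = 1 this reads c_1'(t) = −4·Re(q)·d_2(t)·(c_1(t)+c_2(t))/(1+c_2(t)²) − 4·Im(q)·d_2(t)·(1−c_1(t)c_2(t))/(1+c_2(t)²). -/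

import Mathlib

/-!
For `1 ≤ n`, `β n t` is the image of the real number `c n t` under a Cayley transform, hence lies on
the unit circle, and `α n / (β n * β (n - 1)) = conj (α n)`; for `n = 1` both sides vanish. So the
lattice equation reads `(β n)' = β n * (w - conj w)` with `w = conj q * (α n - α (n + 1))`. Since
the Cayley transform has logarithmic derivative `-2 * I / (1 + x ^ 2)`, this amounts to
`(c n)' = -(1 + (c n) ^ 2) * w.im`, and the imaginary part is explicit.
-/

namespace RelativisticToda

open Complex
open scoped ComplexConjugate

/-- The Cayley transform of the real line onto the unit circle minus the point `1`, normalized so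
that `β n = cayley (c n)` for `1 ≤ n`. -/
noncomputable def cayley (x : ℝ) : ℂ :=
  -((1 - I * (x : ℂ)) / (1 + I * (x : ℂ)))

/-- The coefficient `α n`, as a function of `δ = d n`, `x = c n` and `y = c (n - 1)`. -/
noncomputable def coupling (δ x y : ℝ) : ℂ :=
  4 * (δ : ℂ) / ((1 + I * (x : ℂ)) * (1 + I * (y : ℂ)))

lemma one_add_I_mul_ofReal_ne_zero (x : ℝ) : 1 + I * (x : ℂ) ≠ 0 :=
  fun h => by simpa using congrArg re h

lemma one_sub_I_mul_ofReal_ne_zero (x : ℝ) : 1 - I * (x : ℂ) ≠ 0 :=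
  fun h => by simpa using congrArg re h

lemma one_add_I_mul_mul_one_sub_I_mul (z : ℂ) : (1 + I * z) * (1 - I * z) = 1 + z ^ 2 := by
  linear_combination -z ^ 2 * I_sq

lemma one_add_ofReal_sq_ne_zero (x : ℝ) : 1 + (x : ℂ) ^ 2 ≠ 0 := by
  rw [← one_add_I_mul_mul_one_sub_I_mul]
  exact mul_ne_zero (one_add_I_mul_ofReal_ne_zero x) (one_sub_I_mul_ofReal_ne_zero x)

lemma cayley_ne_zero (x : ℝ) : cayley x ≠ 0 :=
  neg_ne_zero.mpr (div_ne_zero (one_sub_I_mul_ofReal_ne_zero x) (one_add_I_mul_ofReal_ne_zero x))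

lemma one_sub_cayley (x : ℝ) : 1 - cayley x = 2 / (1 + I * x) := by
  have hx := one_add_I_mul_ofReal_ne_zero x
  rw [cayley]
  field_simp
  ring

lemma one_sub_cayley_ne_zero (x : ℝ) : 1 - cayley x ≠ 0 := by
  rw [one_sub_cayley]
  exact div_ne_zero two_ne_zero (one_add_I_mul_ofReal_ne_zero x)

lemma one_add_cayley_div_one_sub_cayley (x : ℝ) :
    (1 + cayley x) / (1 - cayley x) = x * I := by
  have hx := one_add_I_mul_ofReal_ne_zero x
  rw [one_sub_cayley, cayley]
  field_simp
  ring

lemma hasDerivAt_cayley (x : ℝ) :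
    HasDerivAt cayley (cayley x * (-2 * I / (1 + (x : ℂ) ^ 2))) x := by
  have hplus := one_add_I_mul_ofReal_ne_zero x
  have hminus := one_sub_I_mul_ofReal_ne_zero x
  have hlin : HasDerivAt (fun y : ℝ => I * (y : ℂ)) I x := by
    simpa using (hasDerivAt_id x).ofReal_comp.const_mul I
  refine ((hlin.const_sub 1).div (hlin.const_add 1) hplus).neg.congr_deriv ?_
  rw [cayley, ← one_add_I_mul_mul_one_sub_I_mul]
  field_simp
  ring

lemma differentiableAt_cayley_comp_iff {c : ℝ → ℝ} {t : ℝ} :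
    DifferentiableAt ℝ (fun s => cayley (c s)) t ↔ DifferentiableAt ℝ c t := by
  refine ⟨fun h => ?_, fun h => (hasDerivAt_cayley (c t)).differentiableAt.comp t h⟩
  have hinv : DifferentiableAt ℝ (fun s => (1 + cayley (c s)) / (1 - cayley (c s))) t :=
    (h.const_add 1).fun_div (h.const_sub 1) (one_sub_cayley_ne_zero (c t))
  simp only [one_add_cayley_div_one_sub_cayley] at hinv
  simpa only [Function.comp_def, imCLM_apply, re_ofReal_mul, im_ofReal_mul, I_im, mul_one]
    using imCLM.differentiableAt.comp t hinv

lemma hasDerivAt_of_cayley_comp {c : ℝ → ℝ} {t : ℝ} {w : ℂ}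
    (h : HasDerivAt (fun s => cayley (c s)) (cayley (c t) * (w - conj w)) t) :
    HasDerivAt c (-(1 + c t ^ 2) * w.im) t := by
  have hc : HasDerivAt c (deriv c t) t :=
    (differentiableAt_cayley_comp_iff.mp h.differentiableAt).hasDerivAt
  have hchain := (hasDerivAt_cayley (c t)).scomp t hc
  have hlog : w - conj w = deriv c t * (-2 * I / (1 + (c t : ℂ) ^ 2)) := by
    refine mul_left_cancel₀ (cayley_ne_zero (c t)) ((h.unique hchain).trans ?_)
    rw [real_smul]
    ring
  refine hc.congr_deriv ?_
  have hsq := one_add_ofReal_sq_ne_zero (c t)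
  rw [sub_conj] at hlog
  field_simp at hlog
  apply ofReal_injective
  push_cast at hlog ⊢
  linear_combination hlog / 2

lemma coupling_comm (δ x y : ℝ) : coupling δ x y = coupling δ y x := by
  rw [coupling, coupling, mul_comm (1 + I * (x : ℂ))]

lemma coupling_zero (x y : ℝ) : coupling 0 x y = 0 := by
  simp [coupling]

lemma conj_coupling_mul_cayley_mul_cayley (δ x y : ℝ) :
    conj (coupling δ x y) * (cayley x * cayley y) = coupling δ x y := by
  have hx := one_sub_I_mul_ofReal_ne_zero x
  have hy := one_sub_I_mul_ofReal_ne_zero y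
  have hconj : conj (coupling δ x y) = 4 * δ / ((1 - I * x) * (1 - I * y)) := by
    simp [coupling, map_ofNat, ← sub_eq_add_neg]
  rw [hconj, coupling, cayley, cayley]
  field_simp

lemma coupling_eq_ofReal_mul (δ x y : ℝ) :
    coupling δ x y =
      (4 * δ / ((1 + x ^ 2) * (1 + y ^ 2)) : ℝ) * ((1 - x * y : ℝ) - (x + y : ℝ) * I) := by
  have hx := one_add_I_mul_ofReal_ne_zero x
  have hy := one_add_I_mul_ofReal_ne_zero y
  have hx' := one_sub_I_mul_ofReal_ne_zero x
  have hy' := one_sub_I_mul_ofReal_ne_zero y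
  push_cast
  rw [coupling, ← one_add_I_mul_mul_one_sub_I_mul, ← one_add_I_mul_mul_one_sub_I_mul]
  field_simp
  linear_combination (δ * x * y : ℂ) * I_sq

lemma im_conj_mul_coupling (q : ℂ) (δ x y : ℝ) :
    (1 + x ^ 2) * (conj q * coupling δ x y).im =
      -(4 * q.re * (δ * (x + y) / (1 + y ^ 2)) + 4 * q.im * (δ * (1 - x * y) / (1 + y ^ 2))) := by
  rw [coupling_eq_ofReal_mul, mul_left_comm, im_ofReal_mul]
  simp only [mul_im, sub_re, sub_im, conj_re, conj_im, ofReal_re, ofReal_im, mul_re, I_re, I_im]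
  field_simp
  ring

lemma hasDerivAt_of_cayley_comp_toda {q : ℂ} {c : ℝ → ℝ} {t δ ε x y : ℝ}
    (h : HasDerivAt (fun s => cayley (c s))
      (conj q * cayley (c t) * (coupling δ (c t) x - coupling ε (c t) y) +
        q * cayley (c t) * (conj (coupling ε (c t) y) - conj (coupling δ (c t) x))) t) :
    HasDerivAt c
      (4 * q.re * (δ * (c t + x) / (1 + x ^ 2) - ε * (c t + y) / (1 + y ^ 2)) +
        4 * q.im * (δ * (1 - c t * x) / (1 + x ^ 2) - ε * (1 - c t * y) / (1 + y ^ 2))) t := by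
  have hlog : HasDerivAt (fun s => cayley (c s)) (cayley (c t) *
      ((conj q * coupling δ (c t) x - conj q * coupling ε (c t) y) -
        conj (conj q * coupling δ (c t) x - conj q * coupling ε (c t) y))) t := by
    refine h.congr_deriv ?_
    simp only [map_mul, map_sub, conj_conj]
    ring
  refine (hasDerivAt_of_cayley_comp hlog).congr_deriv ?_
  rw [sub_im]
  linear_combination im_conj_mul_coupling q ε (c t) y - im_conj_mul_coupling q δ (c t) x

end RelativisticToda

open RelativisticToda ComplexConjugate in
theorem stmt_16_general (q : ℂ) (c d : ℕ → ℝ → ℝ) (hd1 : ∀ t, d 1 t = 0)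
    (β α : ℕ → ℝ → ℂ) (hβ0 : ∀ t, β 0 t = 1)
    (hβ : ∀ n, 1 ≤ n → ∀ t, β n t = cayley (c n t))
    (hα : ∀ n, 1 ≤ n → ∀ t, α n t = coupling (d n t) (c n t) (c (n - 1) t))
    (hToda : ∀ n, 1 ≤ n → ∀ t, HasDerivAt (β n)
      (conj q * β n t * (α n t - α (n + 1) t) +
        q * β n t *
          (α (n + 1) t / (β (n + 1) t * β n t) - α n t / (β n t * β (n - 1) t))) t)
    (n : ℕ) (hn : 1 ≤ n) (t : ℝ) :
    HasDerivAt (c n)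
      (4 * q.re *
          (d n t * (c n t + c (n - 1) t) / (1 + (c (n - 1) t) ^ 2) -
            d (n + 1) t * (c n t + c (n + 1) t) / (1 + (c (n + 1) t) ^ 2)) +
        4 * q.im *
          (d n t * (1 - c n t * c (n - 1) t) / (1 + (c (n - 1) t) ^ 2) -
            d (n + 1) t * (1 - c n t * c (n + 1) t) / (1 + (c (n + 1) t) ^ 2))) t := by
  have hβ_ne : ∀ k, β k t ≠ 0 := by
    rintro (_ | k)
    · exact hβ0 t ▸ one_ne_zero
    · exact hβ (k + 1) k.succ_pos t ▸ cayley_ne_zero _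
  have hα_div : ∀ k, 1 ≤ k → α k t / (β k t * β (k - 1) t) = conj (α k t) := by
    intro k hk
    refine (div_eq_iff (mul_ne_zero (hβ_ne k) (hβ_ne (k - 1)))).mpr ?_
    obtain rfl | hk' := hk.eq_or_lt
    · rw [hα 1 le_rfl, hd1, coupling_zero, map_zero, zero_mul]
    · rw [hα k hk, hβ k hk, hβ (k - 1) (Nat.le_sub_one_of_lt hk'),
        conj_coupling_mul_cayley_mul_cayley]
  have hα_div_succ : α (n + 1) t / (β (n + 1) t * β n t) = conj (α (n + 1) t) :=
    hα_div (n + 1) n.succ_pos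
  have hα_succ : α (n + 1) t = coupling (d (n + 1) t) (c n t) (c (n + 1) t) :=
    (hα (n + 1) n.succ_pos t).trans (coupling_comm _ _ _)
  have hβ_deriv := hToda n hn t
  rw [hα_div n hn, hα_div_succ, hα n hn, hα_succ, funext (hβ n hn)] at hβ_deriv
  exact hasDerivAt_of_cayley_comp_toda hβ_deriv

theorem stmt_16 (q : ℂ) (c d : ℕ → ℝ → ℝ)
    (hcdiff : ∀ n, Differentiable ℝ (c n)) (hddiff : ∀ n, Differentiable ℝ (d n))
    (hc0 : ∀ t, c 0 t = 1) (hd1 : ∀ t, d 1 t = 0)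
    (β α : ℕ → ℝ → ℂ)
    (hβ0 : ∀ t, β 0 t = 1) (hα0 : ∀ t, α 0 t = -1)
    (hβ : ∀ n, 1 ≤ n → ∀ t, β n t =
      -((1 - Complex.I * (c n t : ℂ)) / (1 + Complex.I * (c n t : ℂ))))
    (hα : ∀ n, 1 ≤ n → ∀ t, α n t =
      4 * (d n t : ℂ) /
        ((1 + Complex.I * (c n t : ℂ)) * (1 + Complex.I * (c (n - 1) t : ℂ))))
    (hToda : ∀ n, 1 ≤ n → ∀ t, deriv (β n) t =
      (starRingEnd ℂ) q * β n t * (α n t - α (n + 1) t) +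
        q * β n t *
          (α (n + 1) t / (β (n + 1) t * β n t) - α n t / (β n t * β (n - 1) t))) :
    (∀ n, 1 ≤ n → ∀ t : ℝ, deriv (c n) t =
      4 * q.re *
          (d n t * (c n t + c (n - 1) t) / (1 + (c (n - 1) t) ^ 2) -
            d (n + 1) t * (c n t + c (n + 1) t) / (1 + (c (n + 1) t) ^ 2)) +
        4 * q.im *
          (d n t * (1 - c n t * c (n - 1) t) / (1 + (c (n - 1) t) ^ 2) -
            d (n + 1) t * (1 - c n t * c (n + 1) t) / (1 + (c (n + 1) t) ^ 2))) ∧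
    (∀ t : ℝ, deriv (c 1) t =
      -(4 * q.re * (d 2 t * (c 1 t + c 2 t) / (1 + (c 2 t) ^ 2))) -
        4 * q.im * (d 2 t * (1 - c 1 t * c 2 t) / (1 + (c 2 t) ^ 2))) := by
  have hβdiff : ∀ n, 1 ≤ n → Differentiable ℝ (β n) := fun n hn t =>
    funext (hβ n hn) ▸ RelativisticToda.differentiableAt_cayley_comp_iff.mpr (hcdiff n t)
  have hc := fun n hn t => (stmt_16_general q c d hd1 β α hβ0 hβ hα
    (fun n hn t => hToda n hn t ▸ (hβdiff n hn t).hasDerivAt) n hn t).deriv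
  refine ⟨hc, fun t => ?_⟩
  rw [hc 1 le_rfl t, hd1]
  ring
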